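/- Let (K, σ) be a difference field with n ≥ 2. For every m ∈ M(K) there exists a unique u ∈ U(K) such that σ(u)·m·u⁻¹ ∈ A(K). That is, the group U(K) acts freely on M(K) by the σ-twisted gauge transformation u·m := σ(u)·m·u⁻¹, and A(K) is a cross-section for this action. (This is the SL(n) instance, over an arbitrary difference field, of the q-difference Drinfeld–Sokolov cross-section theorem of Frenkel–Reshetikhin–Semenov-Tian-Shansky and Sevostyanov.) -/

import Mathlib

/-- Steinberg's cross-section `A(K)` for `SL(n)` and the standard Coxeter element. -/
def IsSteinbergA {n : ℕ} {R : Type*} [CommRing R] (m : Matrix (Fin n) (Fin n) R) : Prop :=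
  (∀ i j : Fin n, (i : ℕ) = 0 → (j : ℕ) = n - 1 → m i j = (-1) ^ (n - 1)) ∧
  (∀ i j : Fin n, (i : ℕ) = (j : ℕ) + 1 → m i j = 1) ∧
  (∀ i j : Fin n, (i : ℕ) ≠ 0 → (i : ℕ) ≠ (j : ℕ) + 1 → m i j = 0)

/-- Upper unitriangular matrices: the group `U(K)`. -/
def IsUniUpper {n : ℕ} {R : Type*} [CommRing R] (u : Matrix (Fin n) (Fin n) R) : Prop :=
  (∀ i : Fin n, u i i = 1) ∧ ∀ i j : Fin n, (j : ℕ) < (i : ℕ) → u i j = 0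

/-- The `K`-points of the double coset `M = U·c̄·U` of `SL(n)`. -/
def IsSteinbergM {n : ℕ} {R : Type*} [CommRing R] (m : Matrix (Fin n) (Fin n) R) : Prop :=
  m.det = 1 ∧
  (∀ i j : Fin n, (i : ℕ) = (j : ℕ) + 1 → m i j = 1) ∧
  (∀ i j : Fin n, (j : ℕ) + 1 < (i : ℕ) → m i j = 0)

open Matrix

/-!
For unitriangular `u`, the matrix `a = σ(u) m u⁻¹` has determinant `1`, and then its corner entry is
forced to be `(-1)^(n-1)` as soon as the rows below the first are those of a companion matrix. So
`a ∈ A(K)` only says that row `i + 1` of `σ(u) m` is row `i` of `u`. As the last row of `u` is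
the last basis vector, this recursion determines `u` from the bottom row upwards; its solution is
unitriangular because multiplication by `m` moves a leading `1` exactly one place to the left.
-/

section LeadingOne

variable {n : ℕ} {R : Type*}

/-- The first nonzero entry of the vector `v` is a `1` in position `i`: the shape of row `i` of a
unitriangular matrix. -/
def HasLeadingOneAt {ι : Type*} [LT ι] [Zero R] [One R] (v : ι → R) (i : ι) : Prop :=
  v i = 1 ∧ ∀ j < i, v j = 0

/-- Upper Hessenberg matrices with all subdiagonal entries equal to `1`: the defining conditions
of `M(K)` other than the one on the determinant. -/
def IsUnitHessenberg [Zero R] [One R] (m : Matrix (Fin (n + 1)) (Fin (n + 1)) R) : Prop :=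
  ∀ j : Fin n, m j.succ j.castSucc = 1 ∧ ∀ i, j.succ < i → m i j.castSucc = 0

theorem hasLeadingOneAt_last_iff [Zero R] [One R] {v : Fin (n + 1) → R} :
    HasLeadingOneAt v (Fin.last n) ↔ v = Pi.single (Fin.last n) 1 := by
  constructor
  · rintro ⟨h_one, h_zero⟩
    ext j
    obtain rfl | hj := eq_or_ne j (Fin.last n)
    · rw [h_one, Pi.single_eq_same]
    · rw [h_zero j (Fin.lt_last_iff_ne_last.2 hj), Pi.single_eq_of_ne hj]
  · rintro rfl
    exact ⟨Pi.single_eq_same _ _, fun j hj => Pi.single_eq_of_ne hj.ne _⟩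

theorem HasLeadingOneAt.map {ι S : Type*} [LT ι] [NonAssocSemiring R] [NonAssocSemiring S]
    {v : ι → R} {i : ι} (hv : HasLeadingOneAt v i) (σ : R →+* S) : HasLeadingOneAt (σ ∘ v) i :=
  ⟨by simp [hv.1], fun j hj => by simp [hv.2 j hj]⟩

theorem HasLeadingOneAt.vecMul [NonAssocSemiring R] {v : Fin (n + 1) → R} {i : Fin n}
    {m : Matrix (Fin (n + 1)) (Fin (n + 1)) R} (hv : HasLeadingOneAt v i.succ)
    (hm : IsUnitHessenberg m) : HasLeadingOneAt (v ᵥ* m) i.castSucc := by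
  constructor
  · calc ∑ l, v l * m l i.castSucc = v i.succ * m i.succ i.castSucc := by
          refine Fintype.sum_eq_single _ fun l hl => ?_
          obtain hlt | hgt := lt_or_gt_of_ne hl
          · rw [hv.2 l hlt, zero_mul]
          · rw [(hm i).2 l hgt, mul_zero]
      _ = 1 := by rw [hv.1, (hm i).1, one_mul]
  · intro j hj
    obtain ⟨j, rfl⟩ := Fin.exists_castSucc_eq.2 (Fin.ne_last_of_lt hj)
    have hji : j.succ < i.succ := Fin.succ_lt_succ_iff.2 (Fin.castSucc_lt_castSucc_iff.1 hj)
    refine Fintype.sum_eq_zero (fun l => v l * m l j.castSucc) fun l => ?_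
    obtain hlt | hle := lt_or_ge l i.succ
    · rw [hv.2 l hlt, zero_mul]
    · rw [(hm j).2 l (hji.trans_le hle), mul_zero]

end LeadingOne

section GaugeMatrix

variable {n : ℕ} {R : Type*} [Semiring R]

/-- The matrix whose last row is the last basis vector and whose row `i` is `σ` of row `i + 1`
multiplied by `m`. For `m ∈ M(K)` it is the unique `u ∈ U(K)` with `σ(u) * m * u⁻¹ ∈ A(K)`. -/
def gaugeMatrix (σ : R →+* R) (m : Matrix (Fin (n + 1)) (Fin (n + 1)) R) :
    Matrix (Fin (n + 1)) (Fin (n + 1)) R :=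
  Fin.reverseInduction (Pi.single (Fin.last n) 1) fun _ v => (σ ∘ v) ᵥ* m

variable (σ : R →+* R) (m : Matrix (Fin (n + 1)) (Fin (n + 1)) R)

theorem gaugeMatrix_last : gaugeMatrix σ m (Fin.last n) = Pi.single (Fin.last n) 1 :=
  Fin.reverseInduction_last ..

theorem gaugeMatrix_castSucc (i : Fin n) :
    gaugeMatrix σ m i.castSucc = (σ ∘ gaugeMatrix σ m i.succ) ᵥ* m :=
  Fin.reverseInduction_castSucc ..

variable {σ m}

theorem eq_gaugeMatrix_iff {u : Matrix (Fin (n + 1)) (Fin (n + 1)) R} :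
    u = gaugeMatrix σ m ↔ u (Fin.last n) = Pi.single (Fin.last n) 1 ∧
      ∀ i : Fin n, u i.castSucc = (σ ∘ u i.succ) ᵥ* m := by
  constructor
  · rintro rfl
    exact ⟨gaugeMatrix_last σ m, gaugeMatrix_castSucc σ m⟩
  · rintro ⟨h_last, h_castSucc⟩
    funext i
    induction i using Fin.reverseInduction with
    | last => rw [h_last, gaugeMatrix_last]
    | cast i ih => rw [h_castSucc, gaugeMatrix_castSucc, ih]

theorem hasLeadingOneAt_gaugeMatrix (hm : IsUnitHessenberg m) (i : Fin (n + 1)) :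
    HasLeadingOneAt (gaugeMatrix σ m i) i := by
  induction i using Fin.reverseInduction with
  | last => exact hasLeadingOneAt_last_iff.2 (gaugeMatrix_last σ m)
  | cast i ih => exact gaugeMatrix_castSucc σ m i ▸ (ih.map σ).vecMul hm

end GaugeMatrix

section CrossSection

variable {n : ℕ} {R : Type*} [CommRing R]

theorem isUniUpper_iff_hasLeadingOneAt {u : Matrix (Fin n) (Fin n) R} :
    IsUniUpper u ↔ ∀ i, HasLeadingOneAt (u i) i :=
  forall_and.symm

theorem IsUniUpper.det_eq_one {u : Matrix (Fin n) (Fin n) R} (hu : IsUniUpper u) : u.det = 1 := by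
  rw [det_of_isUpperTriangular hu.2, Fintype.prod_eq_one _ hu.1]

theorem IsUniUpper.det_gauge {u : Matrix (Fin n) (Fin n) R} (hu : IsUniUpper u) (σ : R →+* R)
    (m : Matrix (Fin n) (Fin n) R) : (u.map σ * m * u⁻¹).det = m.det := by
  have h_map : (u.map σ).det = 1 := by
    rw [← RingHom.mapMatrix_apply, ← RingHom.map_det, hu.det_eq_one, map_one]
  rw [det_mul, det_mul, det_nonsing_inv, h_map, hu.det_eq_one, Ring.inverse_one, one_mul, mul_one]

theorem IsSteinbergM.isUnitHessenberg {m : Matrix (Fin (n + 1)) (Fin (n + 1)) R}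
    (hm : IsSteinbergM m) : IsUnitHessenberg m :=
  fun j => ⟨hm.2.1 j.succ j.castSucc rfl, fun i hi => hm.2.2 i j.castSucc hi⟩

theorem vecMul_nonsing_inv_eq_single_iff {ι : Type*} [Fintype ι] [DecidableEq ι]
    {u : Matrix ι ι R} (hu : IsUnit u.det) {v : ι → R} {i : ι} :
    v ᵥ* u⁻¹ = Pi.single i 1 ↔ v = u i := by
  constructor
  · intro h
    calc v = v ᵥ* u⁻¹ ᵥ* u := by rw [vecMul_vecMul, nonsing_inv_mul u hu, vecMul_one]
      _ = u i := by rw [h, single_one_vecMul, row]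
  · rintro rfl
    ext j
    rw [← mul_apply_eq_vecMul, mul_nonsing_inv u hu, one_eq_pi_single]

theorem det_of_succ_eq_single_castSucc {a : Matrix (Fin (n + 1)) (Fin (n + 1)) R}
    (ha : ∀ i : Fin n, a i.succ = Pi.single i.castSucc 1) :
    a.det = (-1) ^ n * a 0 (Fin.last n) := by
  have h_minor : a.submatrix Fin.succ Fin.castSucc = 1 := by
    ext i j
    simp [ha, Pi.single_apply, one_apply, eq_comm]
  rw [det_succ_column a (Fin.last n), Fin.sum_univ_succ]
  simp [h_minor, ha]

theorem isSteinbergA_iff_of_det_eq_one {a : Matrix (Fin (n + 1)) (Fin (n + 1)) R}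
    (h_det : a.det = 1) :
    IsSteinbergA a ↔ ∀ i : Fin n, a i.succ = Pi.single i.castSucc 1 := by
  constructor
  · rintro ⟨-, h_one, h_zero⟩ i
    ext j
    obtain rfl | hj := eq_or_ne j i.castSucc
    · rw [h_one i.succ i.castSucc rfl, Pi.single_eq_same]
    · rw [h_zero i.succ j (by simp) (by simpa [Fin.ext_iff, eq_comm] using hj),
        Pi.single_eq_of_ne hj]
  · intro h_rows
    have h_corner : a 0 (Fin.last n) = (-1) ^ n := by
      calc a 0 (Fin.last n) = (-1) ^ n * ((-1) ^ n * a 0 (Fin.last n)) := by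
            rw [← mul_assoc, ← mul_pow, neg_one_mul, neg_neg, one_pow, one_mul]
        _ = (-1) ^ n := by rw [← det_of_succ_eq_single_castSucc h_rows, h_det, mul_one]
    refine ⟨fun i j hi hj => ?_, fun i j hij => ?_, fun i j hi hij => ?_⟩
    · obtain rfl : i = 0 := Fin.ext hi
      obtain rfl : j = Fin.last n := Fin.ext hj
      exact h_corner
    · obtain ⟨i, rfl⟩ := Fin.exists_succ_eq.2 (show i ≠ 0 by rintro rfl; simp at hij)
      obtain rfl : j = i.castSucc := Fin.ext (by simpa [eq_comm] using hij)
      rw [h_rows, Pi.single_eq_same]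
    · obtain ⟨i, rfl⟩ := Fin.exists_succ_eq.2 (show i ≠ 0 by rintro rfl; simp at hi)
      rw [h_rows, Pi.single_eq_of_ne (by rintro rfl; simp at hij)]

theorem IsUniUpper.isSteinbergA_gauge_iff {σ : R →+* R}
    {u m : Matrix (Fin (n + 1)) (Fin (n + 1)) R} (hu : IsUniUpper u) (hm : m.det = 1) :
    IsSteinbergA (u.map σ * m * u⁻¹) ↔ u = gaugeMatrix σ m := by
  have h_unit : IsUnit u.det := hu.det_eq_one ▸ isUnit_one
  have h_last : u (Fin.last n) = Pi.single (Fin.last n) 1 :=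
    hasLeadingOneAt_last_iff.1 (isUniUpper_iff_hasLeadingOneAt.1 hu _)
  have h_row (i : Fin n) : (u.map σ * m * u⁻¹) i.succ = Pi.single i.castSucc 1 ↔
      u i.castSucc = (σ ∘ u i.succ) ᵥ* m := by
    rw [mul_apply_eq_vecMul, vecMul_nonsing_inv_eq_single_iff h_unit, mul_apply_eq_vecMul, eq_comm]
    rfl
  rw [isSteinbergA_iff_of_det_eq_one ((hu.det_gauge σ m).trans hm), eq_gaugeMatrix_iff,
    and_iff_right h_last]
  exact forall_congr' h_row

end CrossSection

theorem stmt_15_general {n : ℕ} {R : Type*} [CommRing R] (σ : R →+* R)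
    {m : Matrix (Fin (n + 1)) (Fin (n + 1)) R} (hm : IsSteinbergM m) :
    ∃! u : Matrix (Fin (n + 1)) (Fin (n + 1)) R,
      IsUniUpper u ∧ IsSteinbergA (u.map σ * m * u⁻¹) := by
  have h_gauge : IsUniUpper (gaugeMatrix σ m) :=
    isUniUpper_iff_hasLeadingOneAt.2 (hasLeadingOneAt_gaugeMatrix hm.isUnitHessenberg)
  exact ⟨gaugeMatrix σ m, ⟨h_gauge, (h_gauge.isSteinbergA_gauge_iff hm.1).2 rfl⟩,
    fun _ ⟨hu, hA⟩ => (hu.isSteinbergA_gauge_iff hm.1).1 hA⟩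

/-- for a difference field `(K, σ)` and every `m ∈ M(K)` there is a unique
`u ∈ U(K)` with `σ(u)·m·u⁻¹ ∈ A(K)`: `U(K)` acts freely on `M(K)` by the σ-twisted gauge
transformation and `A(K)` is a cross-section (the q-difference Drinfeld–Sokolov cross-section
theorem for `SL(n)`). -/
theorem stmt_15 (n : ℕ) (hn : 2 ≤ n) (K : Type*) [Field K] (σ : K ≃+* K)
    (m : Matrix (Fin n) (Fin n) K) (hm : IsSteinbergM m) :
    ∃! u : Matrix (Fin n) (Fin n) K,
      IsUniUpper u ∧ IsSteinbergA (u.map σ * m * u⁻¹) := by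
  obtain ⟨k, rfl⟩ := Nat.exists_eq_add_of_le' hn
  exact stmt_15_general (σ : K →+* K) hm
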